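/- Under the identification M₆ ≅ M₂ ⊗ M₃, consider the unital *-subalgebras M₂ ⊗ ℂ1₃ ⊆ M₆ and ℂ1₂ ⊗ M₃ ⊆ M₆. Then D(M₆ ‖ M₂ ⊗ ℂ1₃) = log 6, D(M₆ ‖ ℂ1₂ ⊗ M₃) = log 4, while D(M₆ ⊗ M₆ ‖ (M₂ ⊗ ℂ1₃) ⊗ (ℂ1₂ ⊗ M₃)) = log 36. In particular the superadditivity D(M₁ ⊗ M₂‖N₁ ⊗ N₂) ≥ D(M₁‖N₁) + D(M₂‖N₂) can be strict. -/

import Mathlib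

open scoped ENNReal Classical ComplexOrder
open Matrix

noncomputable section

namespace GJL

variable {n : Type*} [Fintype n] [DecidableEq n]

/-- `Mat n` is the matrix *-algebra with rows and columns indexed by `n`. -/
abbrev Mat (n : Type*) [Fintype n] [DecidableEq n] := Matrix n n ℂ

/-- A density matrix: positive semidefinite with trace one. -/
def IsDensity (ρ : Mat n) : Prop := ρ.PosSemidef ∧ ρ.trace = 1

/-- The real part of the (matrix) trace. -/
def traceR (A : Mat n) : ℝ := (A.trace).re

/-- Real matrix powers via the continuous functional calculus.  For positive
semidefinite matrices and negative exponents this is the generalized inverse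
power on the support, since `(0 : ℝ) ^ r = 0` for `r ≠ 0`. -/
def mpow (A : Mat n) (r : ℝ) : Mat n := cfc (fun x : ℝ => x ^ r) A

/-- Matrix logarithm on the support (`Real.log 0 = 0`). -/
def mlog (A : Mat n) : Mat n := cfc Real.log A

/-- Schatten `p`-norm `(Tr ((x* x)^(p/2)))^(1/p)`. -/
def snorm (p : ℝ) (x : Mat n) : ℝ := (traceR (mpow (xᴴ * x) (p/2))) ^ (1/p)

/-- Operator norm `‖x‖_∞`. -/
def opNorm (x : Mat n) : ℝ := ‖(Matrix.toEuclideanCLM (𝕜 := ℂ) x : EuclideanSpace ℂ n →L[ℂ] EuclideanSpace ℂ n)‖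

/-- The support projection of `ρ` is dominated by that of `σ` (for positive
semidefinite matrices: `ker σ ⊆ ker ρ`). -/
def suppLe (ρ σ : Mat n) : Prop := ∀ v, σ.mulVec v = 0 → ρ.mulVec v = 0

/-- `e` is the support projection of `ρ`. -/
def IsSupportProj (ρ e : Mat n) : Prop :=
  e.IsHermitian ∧ e * e = e ∧ ∀ v, e.mulVec v = 0 ↔ ρ.mulVec v = 0

/-- `D_∞(ρ‖σ) = log min {λ ≥ 0 | ρ ≤ λ σ}`, `⊤` if no such `λ` exists. -/
def Dinf (ρ σ : Mat n) : EReal :=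
  if ∃ c : ℝ, 0 ≤ c ∧ (c • σ - ρ).PosSemidef then
    ((Real.log (sInf {c : ℝ | 0 ≤ c ∧ (c • σ - ρ).PosSemidef}) : ℝ) : EReal)
  else ⊤

/-- Umegaki relative entropy `D(ρ‖σ) = Tr(ρ log ρ - ρ log σ)`, `⊤` if the
support condition fails. -/
def DU (ρ σ : Mat n) : EReal :=
  if suppLe ρ σ then ((traceR (ρ * mlog ρ - ρ * mlog σ) : ℝ) : EReal) else ⊤

/-- The sandwiched matrix `σ^{(1-p)/(2p)} ρ σ^{(1-p)/(2p)}`; note that for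
`p > 1` the exponent `(1-p)/(2p)` equals `-1/(2p')` with `1/p + 1/p' = 1`. -/
def sandwich (p : ℝ) (ρ σ : Mat n) : Mat n :=
  mpow σ ((1 - p)/(2*p)) * ρ * mpow σ ((1 - p)/(2*p))

/-- The sandwiched Rényi relative entropy `D_p(ρ‖σ)` for `p ∈ [1/2, ∞]`:
for `p ∈ (1,∞)` it is `p' log ‖σ^{-1/(2p')} ρ σ^{-1/(2p')}‖_p
= (p-1)⁻¹ log Tr ((σ^{-1/(2p')} ρ σ^{-1/(2p')})^p)` when the support of `ρ` is
dominated by that of `σ` and `⊤` otherwise; for `p ∈ [1/2, 1)` it is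
`(p-1)⁻¹ log Tr ((σ^{(1-p)/(2p)} ρ σ^{(1-p)/(2p)})^p)` (`⊤` when the trace
vanishes, i.e. when the honest value is `+∞`); `D_1` is the Umegaki relative
entropy and `D_∞` the max-relative entropy. -/
def Dp (p : ℝ≥0∞) (ρ σ : Mat n) : EReal :=
  if p = ⊤ then Dinf ρ σ
  else if p = 1 then DU ρ σ
  else if 1 < p.toReal ∧ ¬ suppLe ρ σ then ⊤
  else if traceR (mpow (sandwich p.toReal ρ σ) p.toReal) = 0 then ⊤
  else (((p.toReal - 1)⁻¹ * Real.log (traceR (mpow (sandwich p.toReal ρ σ) p.toReal)) : ℝ) : EReal)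

/-- `D_p(ρ‖S) = inf { D_p(ρ‖σ) | σ a density in S }`. -/
def DpSet (p : ℝ≥0∞) (ρ : Mat n) (S : Set (Mat n)) : EReal :=
  ⨅ σ ∈ {σ ∈ S | IsDensity σ}, Dp p ρ σ

/-- `D_p(A‖S) = sup { D_p(ρ‖S) | ρ a density in A }`. -/
def DpRel (p : ℝ≥0∞) (A S : Set (Mat n)) : EReal :=
  ⨆ ρ ∈ {ρ ∈ A | IsDensity ρ}, DpSet p ρ S

open scoped Kronecker in
/-- The algebraic tensor product `N₁ ⊗ N₂ ⊆ M_{n₁} ⊗ M_{n₂} = M_{n₁ × n₂}`,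
realized as the linear span of Kronecker products. -/
def tensorSpan {n₁ n₂ : Type*} [Fintype n₁] [DecidableEq n₁] [Fintype n₂] [DecidableEq n₂]
    (N₁ : Set (Mat n₁)) (N₂ : Set (Mat n₂)) : Set (Mat (n₁ × n₂)) :=
  ↑(Submodule.span ℂ {z : Mat (n₁ × n₂) | ∃ x ∈ N₁, ∃ y ∈ N₂, z = x ⊗ₖ y})

/-- `D_{p,cb}(M‖N) = sup_k D_p(M_k ⊗ M ‖ M_k ⊗ N)`. -/
def DpCb (p : ℝ≥0∞) (N : Set (Mat n)) : EReal :=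
  ⨆ k : ℕ, DpRel p Set.univ (tensorSpan (Set.univ : Set (Mat (Fin k))) N)

/-- `E` is the trace preserving conditional expectation onto `N`, i.e. the
orthogonal projection onto `N` with respect to the Hilbert–Schmidt inner
product `⟨x,y⟩ = Tr(x* y)`. -/
def IsCondExp (N : Set (Mat n)) (E : Mat n →ₗ[ℂ] Mat n) : Prop :=
  (∀ x, E x ∈ N) ∧ (∀ x ∈ N, E x = x) ∧
    ∀ x y, y ∈ N → ((E x)ᴴ * y).trace = (xᴴ * y).trace

/-- The Pimsner–Popa index constant
`λ(M:N) = max {c ≥ 0 | c x ≤ E(x) for all x ≥ 0}`. -/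
def ppIndex (E : Mat n →ₗ[ℂ] Mat n) : ℝ :=
  sSup {c : ℝ | 0 ≤ c ∧ ∀ x : Mat n, x.PosSemidef → (E x - c • x).PosSemidef}

/-- von Neumann entropy `H(ρ) = -Tr(ρ log ρ)`. -/
def vnEntropy (ρ : Mat n) : ℝ := - traceR (ρ * mlog ρ)

/-- The amplification `id_{M_k} ⊗ Φ` acting on `M_k ⊗ M_n = M_{k × n}`,
applying `Φ` blockwise. -/
def ampFun (k : Type*) [Fintype k] [DecidableEq k] (Φ : Mat n →ₗ[ℂ] Mat n)
    (X : Mat (k × n)) : Mat (k × n) :=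
  Matrix.of fun a b => Φ (Matrix.of fun s t => X (a.1, s) (b.1, t)) a.2 b.2

/-- Complete positivity: all amplifications `id_{M_k} ⊗ Φ` preserve positive
semidefiniteness. -/
def IsCP (Φ : Mat n →ₗ[ℂ] Mat n) : Prop :=
  ∀ (k : ℕ) (X : Mat (Fin k × n)), X.PosSemidef → (ampFun (Fin k) Φ X).PosSemidef

/-- Completely positive and trace preserving. -/
def IsCPTP (Φ : Mat n →ₗ[ℂ] Mat n) : Prop :=
  IsCP Φ ∧ ∀ x : Mat n, (Φ x).trace = x.trace

/-- Scalar multiples of the identity, `ℂ·1`. -/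
def scalarAlg (n : Type*) [Fintype n] [DecidableEq n] : Set (Mat n) :=
  {x : Mat n | ∃ c : ℂ, x = c • (1 : Mat n)}

/-!
Expanding `ρ` and `σ` in their eigenbases turns `D(ρ‖σ)` into a classical expectation of logarithms
(Nussbaum–Szkoła), to which Jensen's inequality applies. On the one hand it gives
`D(ρ‖σ) ≤ log c` whenever `ρ ≤ c σ`, since then `Tr (ρ² σ⁻¹) ≤ c`; on the other hand, for a pure
state `ρ`, it gives `D(ρ‖σ) ≥ log c` whenever `Tr (ρ σ) ≤ c⁻¹`.

For `m ≤ n` the extremal states are maximally entangled. The maximally mixed state dominates every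
state up to the dimension, which settles `Mₘ ⊗ ℂ1ₙ` and the tensor product of the two algebras. For
`ℂ1ₘ ⊗ Mₙ` the better choice `σ = m⁻¹ 1 ⊗ Tr₁ ρ` satisfies `ρ ≤ m² σ`, because a positive matrix
partitioned into `m × m` blocks is at most `m` times its block diagonal. In the doubled system a
state can be maximally entangled between the two copies of `Mₘ ⊗ Mₙ`; it has overlap `(m n)⁻²` with
every density of the tensor product algebra, so its relative entropy is `log (m n)²`, whereas the
two separate values only add up to `log (m n) + log m²`.
-/

section RelativeEntropyBounds

open scoped MatrixOrder

variable {ρ σ : Mat n} {c : ℝ}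

lemma traceR_sub (A B : Mat n) : traceR (A - B) = traceR A - traceR B := by
  simp only [traceR, trace_sub, Complex.sub_re]

lemma traceR_smul (r : ℝ) (A : Mat n) : traceR (r • A) = r * traceR A := by
  simp only [traceR, trace_smul, Complex.real_smul, Complex.re_ofReal_mul]

lemma traceR_mono {A B : Mat n} (h : A ≤ B) : traceR A ≤ traceR B := by
  rw [← sub_nonneg, ← traceR_sub]
  exact (Complex.nonneg_iff.1 (le_iff.1 h).trace_nonneg).1

lemma IsDensity.traceR_eq_one (hρ : IsDensity ρ) : traceR ρ = 1 := by
  rw [traceR, hρ.2, Complex.one_re]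

lemma IsDensity.le_one (hρ : IsDensity ρ) : ρ ≤ 1 := by
  have hsum : ∑ i, hρ.1.1.eigenvalues i = 1 := by
    simpa using congrArg Complex.re (hρ.1.1.trace_eq_sum_eigenvalues.symm.trans hρ.2)
  rw [CFC.le_one_iff (R := ℝ) ρ hρ.1.1.isSelfAdjoint]
  intro x hx
  obtain ⟨i, rfl⟩ := hρ.1.1.spectrum_real_eq_range_eigenvalues ▸ hx
  exact hsum ▸ Finset.single_le_sum (fun j _ => hρ.1.eigenvalues_nonneg j) (Finset.mem_univ i)

lemma suppLe_of_le_smul (hρ : ρ.PosSemidef) (h : ρ ≤ c • σ) : suppLe ρ σ := by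
  intro v hv
  have hle := (le_iff.1 h).dotProduct_mulVec_nonneg v
  rw [sub_mulVec, smul_mulVec, hv, smul_zero, zero_sub, dotProduct_neg] at hle
  exact (hρ.dotProduct_mulVec_zero_iff v).1
    (le_antisymm (neg_nonneg.1 hle) (hρ.dotProduct_mulVec_nonneg v))

lemma mpow_neg_one_mul_mul_mpow_neg_one (hσ : σ.IsHermitian) :
    mpow σ (-1) * σ * mpow σ (-1) = mpow σ (-1) := by
  have hcont (f : ℝ → ℝ) : ContinuousOn f (spectrum ℝ σ) := σ.finite_real_spectrum.continuousOn f
  simp only [mpow, Real.rpow_neg_one]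
  nth_rewrite 2 [← cfc_id' ℝ σ hσ.isSelfAdjoint]
  rw [← cfc_mul _ _ σ (hcont _) (hcont _), ← cfc_mul _ _ σ (hcont _) (hcont _)]
  exact cfc_congr fun x _ => by simpa only [inv_inv] using mul_inv_mul_cancel x⁻¹

/-- The first of the two Nussbaum–Szkoła distributions of a pair of Hermitian matrices,
`P (i, j) = pᵢ |⟨vᵢ, uⱼ⟩|²`, where `vᵢ` and `uⱼ` are the eigenvectors of `ρ` and `σ` and `pᵢ` are
the eigenvalues of `ρ`. It turns traces of products of functions of `ρ` and `σ` into classical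
expectations. -/
def nussbaumSzkola (hρ : ρ.IsHermitian) (hσ : σ.IsHermitian) (x : n × n) : ℝ :=
  hρ.eigenvalues x.1 *
    Complex.normSq ((star (hρ.eigenvectorUnitary : Mat n) * hσ.eigenvectorUnitary) x.1 x.2)

lemma nussbaumSzkola_nonneg (hρ : ρ.PosSemidef) (hσ : σ.IsHermitian) (x : n × n) :
    0 ≤ nussbaumSzkola hρ.1 hσ x :=
  mul_nonneg (hρ.eigenvalues_nonneg _) (Complex.normSq_nonneg _)

lemma traceR_cfc_mul_cfc (hρ : ρ.IsHermitian) (hσ : σ.IsHermitian) (f g : ℝ → ℝ) :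
    traceR (cfc f ρ * cfc g σ) = ∑ x : n × n, f (hρ.eigenvalues x.1) * g (hσ.eigenvalues x.2) *
      Complex.normSq
        ((star (hρ.eigenvectorUnitary : Mat n) * hσ.eigenvectorUnitary) x.1 x.2) := by
  set V := (hρ.eigenvectorUnitary : Mat n)
  set U := (hσ.eigenvectorUnitary : Mat n)
  set a : n → ℂ := fun i => (f (hρ.eigenvalues i) : ℂ)
  set b : n → ℂ := fun j => (g (hσ.eigenvalues j) : ℂ)
  have hcfcρ : cfc f ρ = V * diagonal a * star V := hρ.cfc_eq f
  have hcfcσ : cfc g σ = U * diagonal b * star U := hσ.cfc_eq g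
  have hcycle : (cfc f ρ * cfc g σ).trace
      = (diagonal a * (star V * U) * diagonal b * star (star V * U)).trace := by
    rw [hcfcρ, hcfcσ, star_mul, star_star, mul_assoc V, mul_assoc V, trace_mul_comm V]
    simp only [mul_assoc]
  rw [traceR, hcycle, trace, Complex.re_sum, Fintype.sum_prod_type]
  refine Finset.sum_congr rfl fun i _ => ?_
  rw [diag_apply, mul_apply, Complex.re_sum]
  refine Finset.sum_congr rfl fun j _ => ?_
  rw [mul_diagonal, diagonal_mul, star_apply, Complex.star_def, mul_right_comm, mul_assoc (a i),
    Complex.mul_conj, mul_right_comm]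
  simp only [a, b, ← Complex.ofReal_mul, Complex.ofReal_re]

lemma traceR_mul_cfc_mul_cfc (hρ : ρ.IsHermitian) (hσ : σ.IsHermitian) (f g : ℝ → ℝ) :
    traceR (ρ * cfc f ρ * cfc g σ) = ∑ x, nussbaumSzkola hρ hσ x *
      (f (hρ.eigenvalues x.1) * g (hσ.eigenvalues x.2)) := by
  have hmul : ρ * cfc f ρ = cfc (fun x => x * f x) ρ := by
    rw [cfc_mul _ _ ρ (ρ.finite_real_spectrum.continuousOn _)
      (ρ.finite_real_spectrum.continuousOn _), cfc_id' ℝ ρ hρ.isSelfAdjoint]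
  rw [hmul, traceR_cfc_mul_cfc hρ hσ]
  refine Finset.sum_congr rfl fun x _ => ?_
  rw [nussbaumSzkola]
  ring

lemma traceR_mul_cfc_right (hρ : ρ.IsHermitian) (hσ : σ.IsHermitian) (g : ℝ → ℝ) :
    traceR (ρ * cfc g σ) = ∑ x, nussbaumSzkola hρ hσ x * g (hσ.eigenvalues x.2) := by
  simpa only [cfc_const_one ℝ ρ hρ.isSelfAdjoint, mul_one, one_mul] using
    traceR_mul_cfc_mul_cfc hρ hσ (fun _ => 1) g

lemma traceR_mul_cfc_left (hρ : ρ.IsHermitian) (hσ : σ.IsHermitian) (f : ℝ → ℝ) :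
    traceR (ρ * cfc f ρ) = ∑ x, nussbaumSzkola hρ hσ x * f (hρ.eigenvalues x.1) := by
  simpa only [cfc_const_one ℝ σ hσ.isSelfAdjoint, mul_one] using
    traceR_mul_cfc_mul_cfc hρ hσ f (fun _ => 1)

lemma sum_nussbaumSzkola (hρ : ρ.IsHermitian) (hσ : σ.IsHermitian) :
    ∑ x, nussbaumSzkola hρ hσ x = traceR ρ := by
  simpa only [cfc_const_one ℝ σ hσ.isSelfAdjoint, mul_one] using
    (traceR_mul_cfc_right hρ hσ (fun _ => 1)).symm

lemma nussbaumSzkola_eq_zero (hρ : ρ.IsHermitian) (hσ : σ.IsHermitian) (h : suppLe ρ σ)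
    {x : n × n} (hx : hσ.eigenvalues x.2 = 0) : nussbaumSzkola hρ hσ x = 0 := by
  set V := (hρ.eigenvectorUnitary : Mat n)
  set U := (hσ.eigenvectorUnitary : Mat n)
  have hker : ρ *ᵥ U.col x.2 = 0 :=
    h _ ((hσ.mulVec_eigenvectorBasis x.2).trans (by rw [hx, zero_smul]))
  have hdiag : star V * ρ = diagonal (fun i => (hρ.eigenvalues i : ℂ)) * star V := by
    conv_lhs => rw [hρ.spectral_theorem, Unitary.conjStarAlgAut_apply, ← mul_assoc, ← mul_assoc,
      Unitary.coe_star_mul_self, one_mul]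
    rfl
  have hentry : (hρ.eigenvalues x.1 : ℂ) * (star V * U) x.1 x.2 = 0 := by
    rw [← diagonal_mul (fun i => (hρ.eigenvalues i : ℂ)), ← mul_assoc, ← hdiag, mul_assoc,
      mul_apply]
    exact Finset.sum_eq_zero fun k _ => mul_eq_zero_of_right _ (congrFun hker k)
  rcases mul_eq_zero.1 hentry with hp | hW
  · rw [nussbaumSzkola, Complex.ofReal_eq_zero.1 hp, zero_mul]
  · rw [nussbaumSzkola, hW, map_zero, mul_zero]

/-- Jensen's inequality for `log`; the weights have to vanish at the zeros of `x`, where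
`Real.log` takes the junk value `0`. -/
lemma sum_mul_log_le_log {ι : Type*} {s : Finset ι} {w x : ι → ℝ} (hw : ∀ i ∈ s, 0 ≤ w i)
    (hw_sum : ∑ i ∈ s, w i = 1) (hx : ∀ i ∈ s, 0 ≤ x i) (hwx : ∀ i ∈ s, x i = 0 → w i = 0)
    (hc : 0 < c) (hle : ∑ i ∈ s, w i * x i ≤ c) :
    ∑ i ∈ s, w i * Real.log (x i) ≤ Real.log c := by
  have htangent : ∀ i ∈ s, w i * Real.log (x i) ≤ c⁻¹ * (w i * x i) + (Real.log c - 1) * w i := by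
    intro i hi
    rcases (hx i hi).eq_or_lt' with hx0 | hx0
    · simp only [hwx i hi hx0, zero_mul, mul_zero, add_zero, le_refl]
    · have hlog := Real.log_le_sub_one_of_pos (div_pos hx0 hc)
      rw [Real.log_div hx0.ne' hc.ne', sub_le_iff_le_add, div_eq_inv_mul] at hlog
      exact (mul_le_mul_of_nonneg_left hlog (hw i hi)).trans_eq (by ring)
  calc ∑ i ∈ s, w i * Real.log (x i)
      ≤ c⁻¹ * ∑ i ∈ s, w i * x i + (Real.log c - 1) * ∑ i ∈ s, w i := by
        simpa only [Finset.sum_add_distrib, Finset.mul_sum] using Finset.sum_le_sum htangent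
    _ ≤ c⁻¹ * c + (Real.log c - 1) * 1 := by rw [hw_sum]; gcongr
    _ = Real.log c := by rw [inv_mul_cancel₀ hc.ne']; ring

/-- `log (Tr (ρ² σ⁻¹))` is the collision (order two Rényi) relative entropy. -/
lemma DU_le_log_of_traceR_le (hρ : IsDensity ρ) (hσ : σ.PosSemidef) (hsupp : suppLe ρ σ)
    (hc : 0 < c) (h : traceR (ρ * ρ * mpow σ (-1)) ≤ c) :
    DU ρ σ ≤ ((Real.log c : ℝ) : EReal) := by
  rw [DU, if_pos hsupp, EReal.coe_le_coe_iff]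
  set P := nussbaumSzkola hρ.1.1 hσ.1
  set p := hρ.1.1.eigenvalues
  set q := hσ.1.eigenvalues
  have hP_zero {x : n × n} (hx : p x.1 * (q x.2)⁻¹ = 0) : P x = 0 := by
    rcases mul_eq_zero.1 hx with hp | hq
    · exact mul_eq_zero_of_left hp _
    · exact nussbaumSzkola_eq_zero hρ.1.1 hσ.1 hsupp (inv_eq_zero.1 hq)
  have hentropy : traceR (ρ * mlog ρ - ρ * mlog σ)
      = ∑ x, P x * Real.log (p x.1 * (q x.2)⁻¹) := by
    rw [traceR_sub, mlog, mlog, traceR_mul_cfc_left hρ.1.1 hσ.1, traceR_mul_cfc_right hρ.1.1 hσ.1,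
      ← Finset.sum_sub_distrib]
    refine Finset.sum_congr rfl fun x _ => ?_
    by_cases hx : p x.1 * (q x.2)⁻¹ = 0
    · rw [show nussbaumSzkola hρ.1.1 hσ.1 x = 0 from hP_zero hx]
      simp only [hP_zero hx, zero_mul, sub_zero]
    · rw [Real.log_mul (left_ne_zero_of_mul hx) (right_ne_zero_of_mul hx), Real.log_inv]
      ring
  have hcollision : traceR (ρ * ρ * mpow σ (-1)) = ∑ x, P x * (p x.1 * (q x.2)⁻¹) := by
    simpa only [cfc_id' ℝ ρ hρ.1.1.isSelfAdjoint, mpow, Real.rpow_neg_one] using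
      traceR_mul_cfc_mul_cfc hρ.1.1 hσ.1 (fun x => x) (fun x => x ^ (-1 : ℝ))
  rw [hentropy]
  exact sum_mul_log_le_log (fun x _ => nussbaumSzkola_nonneg hρ.1 hσ.1 x)
    ((sum_nussbaumSzkola hρ.1.1 hσ.1).trans hρ.traceR_eq_one)
    (fun x _ => mul_nonneg (hρ.1.eigenvalues_nonneg _) (inv_nonneg.2 (hσ.eigenvalues_nonneg _)))
    (fun x _ => hP_zero) hc (hcollision ▸ h)

lemma traceR_mul_mul_mpow_neg_one_le (hρ : IsDensity ρ) (hσ : σ.PosSemidef) (hc : 0 ≤ c)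
    (h : ρ ≤ c • σ) : traceR (ρ * ρ * mpow σ (-1)) ≤ c := by
  set τ := mpow σ (-1)
  set t := traceR (ρ * ρ * τ)
  have hρ_star : star ρ = ρ := hρ.1.1
  have hτ_star : star τ = τ := cfc_predicate (R := ℝ) (p := IsSelfAdjoint) _ σ
  have ht : traceR (ρ * τ * ρ) = t := by rw [traceR, trace_mul_comm, ← mul_assoc]; rfl
  have hupper : traceR (ρ * τ * ρ * τ * ρ) ≤ c * t := by
    have hconj := traceR_mono (star_left_conjugate_le_conjugate h (τ * ρ))
    have hcollapse : τ * (σ * (τ * ρ)) = τ * ρ := by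
      simp only [← mul_assoc]
      rw [mpow_neg_one_mul_mul_mpow_neg_one hσ.1]
    simpa only [star_mul, hρ_star, hτ_star, mul_smul_comm, smul_mul_assoc, traceR_smul, mul_assoc,
      hcollapse, ← ht] using hconj
  -- In the state `ρ`, the operator `τ * ρ` has mean `t`, and its variance is nonnegative.
  have hvariance : t * t ≤ traceR (ρ * τ * ρ * τ * ρ) := by
    have hexpand : star (τ * ρ - t • 1) * ρ * (τ * ρ - t • 1)
        = ρ * τ * ρ * τ * ρ - t • (ρ * τ * ρ) - t • (ρ * τ * ρ - t • ρ) := by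
      simp only [star_sub, star_mul, star_smul, star_one, star_trivial, hρ_star, hτ_star, sub_mul,
        mul_sub, smul_mul_assoc, mul_smul_comm, one_mul, mul_one, smul_sub, mul_assoc]
    have hnonneg : 0 ≤ traceR (star (τ * ρ - t • 1) * ρ * (τ * ρ - t • 1)) := by
      simpa only [traceR, trace_zero, Complex.zero_re] using traceR_mono
        (star_left_conjugate_nonneg (nonneg_iff_posSemidef.2 hρ.1) (τ * ρ - t • 1))
    rw [hexpand] at hnonneg
    simp only [traceR_sub, traceR_smul, ht, hρ.traceR_eq_one] at hnonneg
    linarith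
  nlinarith

lemma DU_le_log_of_le_smul (hρ : IsDensity ρ) (hσ : σ.PosSemidef) (hc : 0 < c)
    (h : ρ ≤ c • σ) : DU ρ σ ≤ ((Real.log c : ℝ) : EReal) :=
  DU_le_log_of_traceR_le hρ hσ (suppLe_of_le_smul hρ.1 h) hc
    (traceR_mul_mul_mpow_neg_one_le hρ hσ hc.le h)

lemma mlog_eq_zero_of_isIdempotentElem (hρ : IsIdempotentElem ρ) : mlog ρ = 0 := by
  rw [mlog, ← cfc_const_zero ℝ ρ]
  refine cfc_congr fun x hx => ?_
  rcases hρ.spectrum_subset ℝ hx with rfl | rfl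
  · exact Real.log_zero
  · exact Real.log_one

lemma log_le_DU_of_isIdempotentElem (hρ : IsDensity ρ) (hpure : IsIdempotentElem ρ)
    (hσ : σ.PosSemidef) (hc : 0 < c) (h : traceR (ρ * σ) ≤ c⁻¹) :
    ((Real.log c : ℝ) : EReal) ≤ DU ρ σ := by
  unfold DU
  split_ifs with hsupp
  · have hoverlap : traceR (ρ * σ) = ∑ x, nussbaumSzkola hρ.1.1 hσ.1 x * hσ.1.eigenvalues x.2 := by
      simpa only [cfc_id' ℝ σ hσ.1.isSelfAdjoint] using
        traceR_mul_cfc_right hρ.1.1 hσ.1 (fun x => x)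
    have hlog : traceR (ρ * mlog σ) ≤ Real.log c⁻¹ := by
      rw [mlog, traceR_mul_cfc_right hρ.1.1 hσ.1]
      exact sum_mul_log_le_log (fun x _ => nussbaumSzkola_nonneg hρ.1 hσ.1 x)
        ((sum_nussbaumSzkola hρ.1.1 hσ.1).trans hρ.traceR_eq_one)
        (fun x _ => hσ.eigenvalues_nonneg _)
        (fun _ _ => nussbaumSzkola_eq_zero hρ.1.1 hσ.1 hsupp) (inv_pos.2 hc) (hoverlap ▸ h)
    rw [EReal.coe_le_coe_iff, traceR_sub, mlog_eq_zero_of_isIdempotentElem hpure, mul_zero, traceR,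
      trace_zero, Complex.zero_re, zero_sub]
    rw [Real.log_inv] at hlog
    exact le_neg_of_le_neg hlog
  · exact le_top

variable {S : Set (Mat n)}

lemma Dp_one (ρ σ : Mat n) : Dp 1 ρ σ = DU ρ σ := by
  rw [Dp, if_neg ENNReal.one_ne_top, if_pos rfl]

lemma DpRel_one_le_log (hc : 0 < c)
    (h : ∀ ρ : Mat n, IsDensity ρ → ∃ σ ∈ S, IsDensity σ ∧ ρ ≤ c • σ) :
    DpRel 1 Set.univ S ≤ ((Real.log c : ℝ) : EReal) := by
  refine iSup₂_le fun ρ ⟨_, hρ⟩ => ?_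
  obtain ⟨σ, hσS, hσ, hle⟩ := h ρ hρ
  refine (iInf₂_le σ ⟨hσS, hσ⟩).trans ?_
  rw [Dp_one]
  exact DU_le_log_of_le_smul hρ hσ.1 hc hle

lemma log_le_DpRel_one (hρ : IsDensity ρ) (hpure : IsIdempotentElem ρ) (hc : 0 < c)
    (h : ∀ σ ∈ S, IsDensity σ → traceR (ρ * σ) ≤ c⁻¹) :
    ((Real.log c : ℝ) : EReal) ≤ DpRel 1 Set.univ S := by
  refine le_iSup₂_of_le ρ ⟨Set.mem_univ ρ, hρ⟩ (le_iInf₂ fun σ ⟨hσS, hσ⟩ => ?_)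
  rw [Dp_one]
  exact log_le_DU_of_isIdempotentElem hρ hpure hσ.1 hc (h σ hσS hσ)

lemma DpRel_one_le_log_card [Nonempty n] (hS : (Fintype.card n : ℝ)⁻¹ • (1 : Mat n) ∈ S) :
    DpRel 1 Set.univ S ≤ ((Real.log (Fintype.card n) : ℝ) : EReal) := by
  have hcard : (0 : ℝ) < Fintype.card n := Nat.cast_pos.2 Fintype.card_pos
  refine DpRel_one_le_log hcard fun ρ hρ => ⟨_, hS, ⟨?_, ?_⟩, ?_⟩
  · exact PosSemidef.one.smul (inv_nonneg.2 hcard.le)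
  · rw [trace_smul, trace_one, Complex.real_smul, Complex.ofReal_inv, Complex.ofReal_natCast,
      inv_mul_cancel₀ (Nat.cast_ne_zero.2 Fintype.card_ne_zero)]
  · rw [smul_inv_smul₀ hcard.ne']
    exact hρ.le_one

end RelativeEntropyBounds

section TensorProduct

open scoped Kronecker MatrixOrder

variable {m : Type*} [Fintype m] [DecidableEq m]

lemma one_mem_scalarAlg : (1 : Mat n) ∈ scalarAlg n := ⟨1, (one_smul ℂ _).symm⟩

lemma kronecker_mem_tensorSpan {A : Set (Mat m)} {B : Set (Mat n)} {a : Mat m} {b : Mat n}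
    (ha : a ∈ A) (hb : b ∈ B) : a ⊗ₖ b ∈ tensorSpan A B :=
  Submodule.subset_span ⟨a, ha, b, hb, rfl⟩

lemma one_mem_tensorSpan {A : Set (Mat m)} {B : Set (Mat n)} (hA : 1 ∈ A) (hB : 1 ∈ B) :
    (1 : Mat (m × n)) ∈ tensorSpan A B :=
  one_kronecker_one (α := ℂ) (m := m) (n := n) ▸ kronecker_mem_tensorSpan hA hB

lemma smul_one_mem_tensorSpan {A : Set (Mat m)} {B : Set (Mat n)} (hA : 1 ∈ A) (hB : 1 ∈ B)
    (r : ℝ) : r • (1 : Mat (m × n)) ∈ tensorSpan A B :=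
  Submodule.smul_of_tower_mem _ r (one_mem_tensorSpan hA hB)

lemma exists_eq_kronecker_one_of_mem_tensorSpan {x : Mat (m × n)}
    (hx : x ∈ tensorSpan Set.univ (scalarAlg n)) : ∃ a : Mat m, x = a ⊗ₖ 1 := by
  induction hx using Submodule.span_induction with
  | mem x hx =>
    obtain ⟨a, -, _, ⟨c, rfl⟩, rfl⟩ := hx
    exact ⟨c • a, by rw [kronecker_smul, smul_kronecker]⟩
  | zero => exact ⟨0, (zero_kronecker _).symm⟩
  | add x y _ _ hx hy =>
    obtain ⟨⟨a, rfl⟩, b, rfl⟩ := And.intro hx hy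
    exact ⟨a + b, (add_kronecker _ _ _).symm⟩
  | smul c x _ hx =>
    obtain ⟨a, rfl⟩ := hx
    exact ⟨c • a, (smul_kronecker _ _ _).symm⟩

lemma exists_eq_one_kronecker_of_mem_tensorSpan {x : Mat (m × n)}
    (hx : x ∈ tensorSpan (scalarAlg m) Set.univ) : ∃ b : Mat n, x = 1 ⊗ₖ b := by
  induction hx using Submodule.span_induction with
  | mem x hx =>
    obtain ⟨_, ⟨c, rfl⟩, b, -, rfl⟩ := hx
    exact ⟨c • b, by rw [kronecker_smul, smul_kronecker]⟩
  | zero => exact ⟨0, (kronecker_zero _).symm⟩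
  | add x y _ _ hx hy =>
    obtain ⟨⟨a, rfl⟩, b, rfl⟩ := And.intro hx hy
    exact ⟨a + b, (kronecker_add _ _ _).symm⟩
  | smul c x _ hx =>
    obtain ⟨b, rfl⟩ := hx
    exact ⟨c • b, (kronecker_smul _ _ _).symm⟩

lemma posSemidef_of_one_kronecker [Nonempty m] {b : Mat n}
    (h : ((1 : Mat m) ⊗ₖ b).PosSemidef) : b.PosSemidef := by
  obtain ⟨i⟩ := ‹Nonempty m›
  convert h.submatrix (Prod.mk i)
  ext s t
  rw [submatrix_apply, kronecker_apply, one_apply_eq, one_mul]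

lemma kronecker_le_kronecker_left {a : Mat m} {b b' : Mat n} (ha : 0 ≤ a) (h : b ≤ b') :
    a ⊗ₖ b ≤ a ⊗ₖ b' := by
  have hsub : a ⊗ₖ (b' - b) = a ⊗ₖ b' - a ⊗ₖ b := map_sub (kroneckerBilinear (R := ℂ) a) b' b
  rw [← sub_nonneg, ← hsub]
  exact (ha.posSemidef.kronecker (sub_nonneg.2 h).posSemidef).nonneg

lemma le_card_smul_sum_conj {ι : Type*} [Fintype ι] [Nonempty ι] {ρ : Mat n} (hρ : 0 ≤ ρ)
    {K : ι → Mat n} (hK : ∑ i, K i = 1) :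
    ρ ≤ (Fintype.card ι : ℝ) • ∑ i, K i * ρ * star (K i) := by
  obtain ⟨c, hcard⟩ : ∃ c : ℝ, (Fintype.card ι : ℝ) = c := ⟨_, rfl⟩
  have hc : 0 < c := hcard ▸ Nat.cast_pos.2 Fintype.card_pos
  have hvariance : ∑ i, (K i - c⁻¹ • 1) * ρ * star (K i - c⁻¹ • 1)
      = ∑ i, K i * ρ * star (K i) - c⁻¹ • ρ := by
    have hK_star : ∑ i, star (K i) = 1 := by rw [← star_sum, hK, star_one]
    simp only [star_sub, star_smul, star_one, star_trivial, sub_mul, mul_sub, smul_mul_assoc,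
      mul_smul_comm, one_mul, mul_one, Finset.sum_sub_distrib, ← Finset.smul_sum,
      ← Finset.sum_mul, ← Finset.mul_sum, hK, hK_star, Finset.sum_const, Finset.card_univ,
      ← Nat.cast_smul_eq_nsmul ℝ, smul_smul, hcard, inv_mul_cancel₀ hc.ne', one_smul, sub_self,
      smul_zero, sub_zero]
  rw [hcard, ← inv_smul_le_iff_of_pos hc, ← sub_nonneg, ← hvariance]
  exact Finset.sum_nonneg fun i _ => star_right_conjugate_nonneg hρ _

lemma le_card_smul_sum_single_kronecker_submatrix [Nonempty m] {ρ : Mat (m × n)}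
    (hρ : ρ.PosSemidef) : ρ ≤ (Fintype.card m : ℝ) •
      ∑ i, single i i 1 ⊗ₖ ρ.submatrix (Prod.mk i) (Prod.mk i) := by
  set K : m → Mat (m × n) := fun i => diagonal fun x => if x.1 = i then 1 else 0
  have hK : ∑ i, K i = 1 := by
    ext x y
    simp only [K, Matrix.sum_apply, diagonal_apply, one_apply]
    split_ifs
    · exact Fintype.sum_ite_eq x.1 fun _ => 1
    · exact Finset.sum_const_zero
  have hblock (i : m) :
      K i * ρ * star (K i) = single i i 1 ⊗ₖ ρ.submatrix (Prod.mk i) (Prod.mk i) := by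
    ext x y
    obtain ⟨⟨j, s⟩, k, t⟩ := x, y
    simp only [K, star_eq_conjTranspose, diagonal_conjTranspose, mul_diagonal, diagonal_mul,
      kronecker_apply, single_apply, submatrix_apply, Pi.star_apply]
    rcases eq_or_ne i j with rfl | hj <;> rcases eq_or_ne i k with rfl | hk <;> simp [*, eq_comm]
  simpa only [hblock] using le_card_smul_sum_conj hρ.nonneg hK

/-- The partial trace over the first tensor factor, that is, the sum of the diagonal blocks. -/
def partialTrace (ρ : Mat (m × n)) : Mat n := ∑ i, ρ.submatrix (Prod.mk i) (Prod.mk i)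

lemma IsDensity.partialTrace {ρ : Mat (m × n)} (hρ : IsDensity ρ) : IsDensity (partialTrace ρ) := by
  refine ⟨posSemidef_sum _ fun i _ => hρ.1.submatrix _, ?_⟩
  rw [GJL.partialTrace, trace_sum, ← hρ.2, trace, Fintype.sum_prod_type]
  rfl

lemma submatrix_le_partialTrace {ρ : Mat (m × n)} (hρ : ρ.PosSemidef) (i : m) :
    ρ.submatrix (Prod.mk i) (Prod.mk i) ≤ partialTrace ρ :=
  Finset.single_le_sum (f := fun i => ρ.submatrix (Prod.mk i) (Prod.mk i))
    (fun _ _ => (hρ.submatrix _).nonneg) (Finset.mem_univ i)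

lemma le_card_smul_one_kronecker_partialTrace [Nonempty m] {ρ : Mat (m × n)}
    (hρ : ρ.PosSemidef) : ρ ≤ (Fintype.card m : ℝ) • (1 ⊗ₖ partialTrace ρ) := by
  have hsingle (i : m) : (single i i (1 : ℂ)).PosSemidef := by
    rw [← diagonal_single]
    exact PosSemidef.diagonal (Pi.single_nonneg.2 zero_le_one)
  have hsum : (∑ i : m, single i i (1 : ℂ)) ⊗ₖ partialTrace ρ
      = ∑ i : m, single i i (1 : ℂ) ⊗ₖ partialTrace ρ :=
    LinearMap.map_sum₂ (kroneckerBilinear (R := ℂ)) _ _ _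
  calc ρ ≤ (Fintype.card m : ℝ) • ∑ i, single i i 1 ⊗ₖ ρ.submatrix (Prod.mk i) (Prod.mk i) :=
        le_card_smul_sum_single_kronecker_submatrix hρ
    _ ≤ (Fintype.card m : ℝ) • ∑ i, single i i 1 ⊗ₖ partialTrace ρ := by
        gcongr with i
        exact kronecker_le_kronecker_left (hsingle i).nonneg (submatrix_le_partialTrace hρ i)
    _ = (Fintype.card m : ℝ) • (1 ⊗ₖ partialTrace ρ) := by rw [← hsum, sum_single_one]

/-- The maximally entangled pure state of `ℂᵐ ⊗ ℂⁿ` along an embedding `ι` of the bases, that is,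
the projection onto the span of `∑ i, eᵢ ⊗ e_{ι i}`. -/
def maxEntangled (ι : m ↪ n) : Mat (m × n) :=
  (Fintype.card m : ℝ)⁻¹ • vecMulVec (fun x => if ι x.1 = x.2 then 1 else 0)
    (star fun x => if ι x.1 = x.2 then 1 else 0)

variable (ι : m ↪ n)

lemma trace_maxEntangled_mul_kronecker (a : Mat m) (b : Mat n) :
    (maxEntangled ι * (a ⊗ₖ b)).trace
      = (Fintype.card m : ℝ)⁻¹ • (a * (b.submatrix ι ι)ᵀ).trace := by
  rw [maxEntangled, smul_mul, trace_smul, vecMulVec_mul, trace_vecMulVec]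
  simp only [dotProduct, vecMul, Pi.star_apply, apply_ite star, star_one, star_zero,
    kronecker_apply, ite_mul, one_mul, zero_mul, Fintype.sum_prod_type, Fintype.sum_ite_eq, trace,
    diag_apply, mul_apply, transpose_apply, submatrix_apply]
  rw [Finset.sum_comm]

lemma trace_maxEntangled [Nonempty m] : (maxEntangled ι).trace = 1 := by
  rw [← mul_one (maxEntangled ι), ← one_kronecker_one, trace_maxEntangled_mul_kronecker,
    submatrix_one_embedding, transpose_one, mul_one, trace_one, Complex.real_smul,
    Complex.ofReal_inv, Complex.ofReal_natCast,
    inv_mul_cancel₀ (Nat.cast_ne_zero.2 Fintype.card_ne_zero)]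

lemma isDensity_maxEntangled [Nonempty m] : IsDensity (maxEntangled ι) :=
  ⟨(posSemidef_vecMulVec_self_star _).smul (inv_nonneg.2 (Nat.cast_nonneg _)), trace_maxEntangled ι⟩

lemma isIdempotentElem_maxEntangled [Nonempty m] : IsIdempotentElem (maxEntangled ι) := by
  have hrank : maxEntangled ι * maxEntangled ι = (maxEntangled ι).trace • maxEntangled ι := by
    simp only [maxEntangled, smul_mul_smul_comm, vecMulVec_mul_vecMulVec, trace_smul,
      trace_vecMulVec]
    rw [vecMulVec_smul, dotProduct_comm, mul_smul, smul_assoc, smul_comm _ _ (vecMulVec _ _)]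
  rwa [trace_maxEntangled, one_smul] at hrank

lemma traceR_kronecker_one (a : Mat m) :
    traceR (a ⊗ₖ (1 : Mat n)) = traceR a * Fintype.card n := by
  rw [traceR, trace_kronecker, trace_one, ← Complex.ofReal_natCast, Complex.re_mul_ofReal, traceR]

lemma traceR_one_kronecker (b : Mat n) :
    traceR ((1 : Mat m) ⊗ₖ b) = Fintype.card m * traceR b := by
  rw [traceR, trace_kronecker, trace_one, ← Complex.ofReal_natCast, Complex.re_ofReal_mul, traceR]

lemma traceR_submatrix_le {b : Mat n} (hb : b.PosSemidef) :
    traceR (b.submatrix ι ι) ≤ traceR b := by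
  rw [traceR, traceR, trace, trace, Complex.re_sum, Complex.re_sum]
  calc ∑ i, (b (ι i) (ι i)).re = ∑ s ∈ Finset.univ.map ι, (b s s).re :=
        (Finset.sum_map _ ι fun s => (b s s).re).symm
    _ ≤ ∑ s, (b s s).re := Finset.sum_le_univ_sum_of_nonneg fun s =>
        (Complex.nonneg_iff.1 hb.diag_nonneg).1

theorem DpRel_one_tensorSpan_univ_scalarAlg [Nonempty m]
    (hmn : Fintype.card m ≤ Fintype.card n) :
    DpRel 1 Set.univ (tensorSpan (Set.univ : Set (Mat m)) (scalarAlg n))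
      = ((Real.log (Fintype.card m * Fintype.card n) : ℝ) : EReal) := by
  obtain ⟨ι⟩ := Function.Embedding.nonempty_of_card_le hmn
  have : Nonempty n := Nonempty.map ι ‹_›
  have hc : (0 : ℝ) < Fintype.card m * Fintype.card n := by
    exact_mod_cast Nat.mul_pos Fintype.card_pos Fintype.card_pos
  refine le_antisymm ?_ <| log_le_DpRel_one (isDensity_maxEntangled ι)
    (isIdempotentElem_maxEntangled ι) hc fun σ hσS hσ => ?_
  · simpa only [Fintype.card_prod, Nat.cast_mul] using
      DpRel_one_le_log_card (smul_one_mem_tensorSpan (Set.mem_univ 1) one_mem_scalarAlg _)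
  · obtain ⟨a, rfl⟩ := exists_eq_kronecker_one_of_mem_tensorSpan hσS
    have ha : traceR a = (Fintype.card n : ℝ)⁻¹ :=
      eq_inv_of_mul_eq_one_left (by rw [← traceR_kronecker_one, hσ.traceR_eq_one])
    rw [traceR, trace_maxEntangled_mul_kronecker, submatrix_one_embedding, transpose_one, mul_one,
      Complex.smul_re, ← traceR, ha, smul_eq_mul, ← mul_inv]

theorem DpRel_one_tensorSpan_scalarAlg_univ [Nonempty m]
    (hmn : Fintype.card m ≤ Fintype.card n) :
    DpRel 1 Set.univ (tensorSpan (scalarAlg m) (Set.univ : Set (Mat n)))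
      = ((Real.log (Fintype.card m ^ 2) : ℝ) : EReal) := by
  obtain ⟨ι⟩ := Function.Embedding.nonempty_of_card_le hmn
  have hm : (0 : ℝ) < Fintype.card m := Nat.cast_pos.2 Fintype.card_pos
  refine le_antisymm (DpRel_one_le_log (pow_pos hm 2) fun ρ hρ => ?_) <|
    log_le_DpRel_one (isDensity_maxEntangled ι) (isIdempotentElem_maxEntangled ι) (pow_pos hm 2)
      fun σ hσS hσ => ?_
  · refine ⟨1 ⊗ₖ ((Fintype.card m : ℝ)⁻¹ • partialTrace ρ),
      kronecker_mem_tensorSpan one_mem_scalarAlg (Set.mem_univ _), ⟨?_, ?_⟩, ?_⟩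
    · exact PosSemidef.one.kronecker (hρ.partialTrace.1.smul (inv_nonneg.2 hm.le))
    · rw [trace_kronecker, trace_one, trace_smul, hρ.partialTrace.2, Complex.real_smul, mul_one,
        Complex.ofReal_inv, Complex.ofReal_natCast,
        mul_inv_cancel₀ (Nat.cast_ne_zero.2 Fintype.card_ne_zero)]
    · rw [kronecker_smul, smul_smul, sq, mul_inv_cancel_right₀ hm.ne']
      exact le_card_smul_one_kronecker_partialTrace hρ.1
  · obtain ⟨b, rfl⟩ := exists_eq_one_kronecker_of_mem_tensorSpan hσS
    have hb : traceR b = (Fintype.card m : ℝ)⁻¹ :=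
      eq_inv_of_mul_eq_one_right (by rw [← traceR_one_kronecker, hσ.traceR_eq_one])
    calc traceR (maxEntangled ι * (1 ⊗ₖ b))
        = (Fintype.card m : ℝ)⁻¹ * traceR (b.submatrix ι ι) := by
          rw [traceR, trace_maxEntangled_mul_kronecker, one_mul, trace_transpose, Complex.smul_re,
            ← traceR, smul_eq_mul]
      _ ≤ (Fintype.card m : ℝ)⁻¹ * (Fintype.card m : ℝ)⁻¹ := by
          rw [← hb]
          gcongr
          · exact hb ▸ inv_nonneg.2 hm.le
          · exact traceR_submatrix_le ι (posSemidef_of_one_kronecker hσ.1)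
      _ = ((Fintype.card m : ℝ) ^ 2)⁻¹ := by rw [← mul_inv, sq]

lemma trace_maxEntangled_refl_mul [Nonempty m] [Nonempty n] {x : Mat ((m × n) × (m × n))}
    (hx : x ∈ tensorSpan (tensorSpan (Set.univ : Set (Mat m)) (scalarAlg n))
      (tensorSpan (scalarAlg m) (Set.univ : Set (Mat n)))) :
    (maxEntangled (Function.Embedding.refl (m × n)) * x).trace
      = ((Fintype.card (m × n) : ℝ) ^ 2)⁻¹ • x.trace := by
  induction hx using Submodule.span_induction with
  | mem x hx =>
    obtain ⟨x, hx, y, hy, rfl⟩ := hx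
    obtain ⟨a, rfl⟩ := exists_eq_kronecker_one_of_mem_tensorSpan hx
    obtain ⟨b, rfl⟩ := exists_eq_one_kronecker_of_mem_tensorSpan hy
    have hprod : (a ⊗ₖ (1 : Mat n)) * ((1 : Mat m) ⊗ₖ b)ᵀ = a ⊗ₖ bᵀ := by
      rw [← kroneckerMap_transpose, ← mul_kronecker_mul, transpose_one, mul_one, one_mul]
    rw [trace_maxEntangled_mul_kronecker, Function.Embedding.coe_refl, submatrix_id_id, hprod]
    have hc : (Fintype.card (m × n) : ℂ) ≠ 0 := Nat.cast_ne_zero.2 Fintype.card_ne_zero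
    calc (Fintype.card (m × n) : ℝ)⁻¹ • (a ⊗ₖ bᵀ).trace
        = ((Fintype.card (m × n) : ℝ) ^ 2)⁻¹ • (Fintype.card (m × n) * (a.trace * b.trace)) := by
          rw [trace_kronecker, trace_transpose, Complex.real_smul, Complex.real_smul]
          push_cast
          field_simp
      _ = ((Fintype.card (m × n) : ℝ) ^ 2)⁻¹ • ((a ⊗ₖ 1) ⊗ₖ (1 ⊗ₖ b)).trace := by
          simp only [trace_kronecker, trace_one, Fintype.card_prod, Nat.cast_mul]
          ring_nf
  | zero => rw [mul_zero, trace_zero, smul_zero]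
  | add x y _ _ hx hy => rw [mul_add, trace_add, trace_add, hx, hy, smul_add]
  | smul c x _ hx => rw [mul_smul_comm, trace_smul, trace_smul, hx, smul_comm]

theorem DpRel_one_tensorSpan_tensorSpan [Nonempty m] [Nonempty n] :
    DpRel 1 Set.univ
        (tensorSpan (tensorSpan (Set.univ : Set (Mat m)) (scalarAlg n))
          (tensorSpan (scalarAlg m) (Set.univ : Set (Mat n))))
      = ((Real.log ((Fintype.card m * Fintype.card n) ^ 2) : ℝ) : EReal) := by
  have hc : (0 : ℝ) < (Fintype.card (m × n)) ^ 2 :=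
    pow_pos (Nat.cast_pos.2 Fintype.card_pos) 2
  rw [← Nat.cast_mul, ← Fintype.card_prod]
  refine le_antisymm ?_ <| log_le_DpRel_one (isDensity_maxEntangled _)
    (isIdempotentElem_maxEntangled (Function.Embedding.refl (m × n))) hc fun σ hσS hσ => ?_
  · rw [← Nat.cast_pow, sq, ← Fintype.card_prod]
    exact DpRel_one_le_log_card (smul_one_mem_tensorSpan
      (one_mem_tensorSpan (Set.mem_univ (1 : Mat m)) one_mem_scalarAlg)
      (one_mem_tensorSpan one_mem_scalarAlg (Set.mem_univ (1 : Mat n))) _)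
  · rw [traceR, trace_maxEntangled_refl_mul hσS, Complex.smul_re, hσ.2, Complex.one_re, smul_eq_mul,
      mul_one]

end TensorProduct

theorem statement10_general {m n : Type*} [Fintype m] [DecidableEq m] [Nonempty m] [Fintype n]
    [DecidableEq n] (hmn : Fintype.card m < Fintype.card n) :
    DpRel 1 Set.univ (tensorSpan (Set.univ : Set (Mat m)) (scalarAlg n))
      = ((Real.log (Fintype.card m * Fintype.card n) : ℝ) : EReal) ∧
    DpRel 1 Set.univ (tensorSpan (scalarAlg m) (Set.univ : Set (Mat n)))
      = ((Real.log (Fintype.card m ^ 2) : ℝ) : EReal) ∧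
    DpRel 1 Set.univ
        (tensorSpan (tensorSpan (Set.univ : Set (Mat m)) (scalarAlg n))
          (tensorSpan (scalarAlg m) (Set.univ : Set (Mat n))))
      = ((Real.log ((Fintype.card m * Fintype.card n) ^ 2) : ℝ) : EReal) ∧
    ((Real.log ((Fintype.card m * Fintype.card n) ^ 2) : ℝ) : EReal) >
      ((Real.log (Fintype.card m * Fintype.card n) : ℝ) : EReal)
        + ((Real.log (Fintype.card m ^ 2) : ℝ) : EReal) := by
  have hm : (0 : ℝ) < Fintype.card m := Nat.cast_pos.2 Fintype.card_pos
  have hmn_real : (Fintype.card m : ℝ) < Fintype.card n := Nat.cast_lt.2 hmn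
  have hn := hm.trans hmn_real
  have : Nonempty n := Fintype.card_pos_iff.1 (Nat.cast_pos.1 hn)
  refine ⟨DpRel_one_tensorSpan_univ_scalarAlg hmn.le, DpRel_one_tensorSpan_scalarAlg_univ hmn.le,
    DpRel_one_tensorSpan_tensorSpan, ?_⟩
  rw [gt_iff_lt, ← EReal.coe_add, EReal.coe_lt_coe_iff,
    ← Real.log_mul (by positivity) (by positivity)]
  refine Real.log_lt_log (by positivity) ?_
  rw [sq, sq]
  gcongr

/-- for `M₂ ⊗ ℂ1₃ ⊆ M₆` and `ℂ1₂ ⊗ M₃ ⊆ M₆` (with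
`M₆ ≅ M₂ ⊗ M₃`) one has `D(M₆‖M₂ ⊗ ℂ1₃) = log 6`, `D(M₆‖ℂ1₂ ⊗ M₃) = log 4`,
while `D(M₆ ⊗ M₆ ‖ (M₂ ⊗ ℂ1₃) ⊗ (ℂ1₂ ⊗ M₃)) = log 36`; thus superadditivity
of the relative entropy to a subalgebra can be strict. -/
theorem statement10 :
    DpRel 1 Set.univ
        (tensorSpan (Set.univ : Set (Mat (Fin 2))) (scalarAlg (Fin 3)))
      = ((Real.log 6 : ℝ) : EReal) ∧
    DpRel 1 Set.univ
        (tensorSpan (scalarAlg (Fin 2)) (Set.univ : Set (Mat (Fin 3))))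
      = ((Real.log 4 : ℝ) : EReal) ∧
    DpRel 1 Set.univ
        (tensorSpan
          (tensorSpan (Set.univ : Set (Mat (Fin 2))) (scalarAlg (Fin 3)))
          (tensorSpan (scalarAlg (Fin 2)) (Set.univ : Set (Mat (Fin 3)))))
      = ((Real.log 36 : ℝ) : EReal) ∧
    ((Real.log 36 : ℝ) : EReal) >
      ((Real.log 6 : ℝ) : EReal) + ((Real.log 4 : ℝ) : EReal) := by
  convert statement10_general (m := Fin 2) (n := Fin 3) (by simp) using 4 <;> norm_num

end GJL
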